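/- For every additive valuation v over a finite set M of indivisible goods and every entitlement b with 0 < b ≤ 1, the following chain of inequalities holds: b·v(M) ≥ APS(b, v, M) ≥ Pessimistic(b, v, M) ≥ (1/2)·APS(b, v, M). -/

import Mathlib

open Finset

def IsPartition {ι : Type*} [DecidableEq ι] (M : Finset ι) {n : ℕ} (A : Fin n → Finset ι) : Prop :=
  (∀ i, A i ⊆ M) ∧ (∀ i j, i ≠ j → Disjoint (A i) (A j)) ∧ ∀ x ∈ M, ∃ i, x ∈ A i

/-- The AnyPrice share (price-based definition): the minimum over all nonnegative
price vectors summing to 1 of the best value of an affordable bundle. -/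
noncomputable def APS {ι : Type*} (b : ℝ) (v : Finset ι → ℝ) (M : Finset ι) : ℝ :=
  sInf {t : ℝ | ∃ p : ι → ℝ, (∀ j ∈ M, 0 ≤ p j) ∧ (∑ j ∈ M, p j) = 1 ∧
    t = sSup {u : ℝ | ∃ S, S ⊆ M ∧ (∑ j ∈ S, p j) ≤ b ∧ u = v S}}

/-- The pessimistic share: the maximum ℓ-out-of-d share over all positive integers
`l, d` with `l / d ≤ b`. -/
noncomputable def Pessimistic {ι : Type*} [DecidableEq ι] (b : ℝ) (v : Finset ι → ℝ) (M : Finset ι) : ℝ :=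
  sSup {t : ℝ | ∃ l d : ℕ, 0 < l ∧ 0 < d ∧ (l : ℝ) / d ≤ b ∧
    ∃ P : Fin d → Finset ι, IsPartition M P ∧
      ∀ J : Finset (Fin d), J.card = l → t ≤ v (J.biUnion P)}

/-- `A` contains `k` disjoint bundles, each of value at least `h`. -/
def Cov {ι : Type*} [DecidableEq ι] (w : ι → ℝ) (h : ℝ) (k : ℕ) (A : Finset ι) : Prop :=
  ∃ f : ι → ℕ, ∀ i < k, h ≤ ∑ j ∈ A.filter (fun j => f j = i), w j

theorem Cov.zero {ι : Type*} [DecidableEq ι] (w : ι → ℝ) (h : ℝ) (A : Finset ι) : Cov w h 0 A :=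
  ⟨fun _ => 0, fun i hi => absurd hi (Nat.not_lt_zero i)⟩

theorem Cov.step {ι : Type*} [DecidableEq ι] {w : ι → ℝ} {h : ℝ} {k : ℕ} {A B : Finset ι}
    (hw : ∀ j ∈ A, 0 ≤ w j) (hBA : B ⊆ A) (hB : h ≤ ∑ j ∈ B, w j) (hc : Cov w h k (A \ B)) :
    Cov w h (k + 1) A := by
  obtain ⟨f, hf⟩ := hc
  refine ⟨fun j => if j ∈ B then k else f j, fun i hi => ?_⟩
  by_cases hik : i = k
  · subst hik
    refine hB.trans (sum_le_sum_of_subset_of_nonneg ?_ ?_)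
    · intro j hj
      simp [hj, hBA hj]
    · intro j hj _
      exact hw j (mem_filter.1 hj).1
  · refine (hf i (by omega)).trans (sum_le_sum_of_subset_of_nonneg ?_ ?_)
    · intro j hj
      simp only [mem_filter, mem_sdiff] at hj ⊢
      simp [hj.1.2, hj.1.1, hj.2]
    · intro j hj _
      exact hw j (mem_filter.1 hj).1

theorem Cov.one {ι : Type*} [DecidableEq ι] {w : ι → ℝ} {h : ℝ} {A : Finset ι}
    (hA : h ≤ ∑ j ∈ A, w j) : Cov w h 1 A := by
  refine ⟨fun _ => 0, fun i hi => ?_⟩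
  have : i = 0 := by omega
  subst this
  simpa using hA

/-- Greedy filling. -/
theorem fill {ι : Type*} [DecidableEq ι] (w : ι → ℝ) (g y : ℝ) (hg : 0 < g) (A : Finset ι)
    (hy : ∀ j ∈ A, w j ≤ y) (hA : g ≤ ∑ j ∈ A, w j) :
    ∃ B ⊆ A, g ≤ ∑ j ∈ B, w j ∧ ∑ j ∈ B, w j ≤ g + y := by
  induction A using Finset.induction_on with
  | empty => simp at hA; linarith
  | insert a s ha ih =>
    by_cases hs : g ≤ ∑ j ∈ s, w j
    · obtain ⟨B, hB, h1, h2⟩ := ih (fun j hj => hy j (mem_insert_of_mem hj)) hs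
      exact ⟨B, hB.trans (subset_insert _ _), h1, h2⟩
    · refine ⟨insert a s, Subset.refl _, hA, ?_⟩
      rw [sum_insert ha]
      have := hy a (mem_insert_self _ _)
      push Not at hs
      linarith

theorem pairs {ι : Type*} [DecidableEq ι] (w : ι → ℝ) (h : ℝ) (k m : ℕ) :
    ∀ (A C : Finset ι), (∀ j ∈ A, 0 ≤ w j) → C ⊆ A → 2 * k ≤ C.card → (∀ j ∈ C, h / 2 ≤ w j) →
      Cov w h m (A \ C) → Cov w h (k + m) A := by
  induction k with
  | zero =>
    intro A C hw hCA hc hC hcov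
    obtain ⟨f, hf⟩ := hcov
    refine ⟨f, fun i hi => (hf i (by omega)).trans (sum_le_sum_of_subset_of_nonneg ?_ ?_)⟩
    · exact filter_subset_filter _ sdiff_subset
    · intro j hj _
      exact hw j (mem_filter.1 hj).1
  | succ k ih =>
    intro A C hw hCA hc hC hcov
    obtain ⟨P, hP, hPc⟩ := exists_subset_card_eq (s := C) (n := 2) (by omega)
    have hPA := hP.trans hCA
    have : k + 1 + m = (k + m) + 1 := by omega
    rw [this]
    refine Cov.step hw hPA ?_ (ih (A \ P) (C \ P) (fun j hj => hw j (sdiff_subset hj)) ?_ ?_ ?_ ?_)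
    · have := card_nsmul_le_sum P w (h / 2) (fun j hj => hC j (hP hj))
      rw [hPc] at this
      simp at this
      linarith
    · exact sdiff_subset_sdiff hCA (Subset.refl _)
    · rw [card_sdiff_of_subset hP]; omega
    · exact fun j hj => hC j (sdiff_subset hj)
    · have : (A \ P) \ (C \ P) = A \ C := by
        ext j
        simp only [mem_sdiff]
        constructor
        · rintro ⟨⟨a, b⟩, c⟩
          exact ⟨a, fun hj => c ⟨hj, b⟩⟩
        · rintro ⟨a, b⟩
          exact ⟨⟨a, fun hj => b (hP hj)⟩, fun hj => b hj.1⟩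
      rwa [this]

theorem sum_le_card {ι : Type*} (w : ι → ℝ) (h : ℝ) (C : Finset ι) (hC : ∀ j ∈ C, w j ≤ h) :
    ∑ j ∈ C, w j ≤ C.card * h := by
  have := sum_le_card_nsmul C w h hC
  simpa using this

theorem L2 {ι : Type*} [DecidableEq ι] (w : ι → ℝ) (h : ℝ) (hh : 0 < h) (n : ℕ) :
    ∀ (A C : Finset ι), (∀ j ∈ A, 0 ≤ w j) → C ⊆ A → C.card ≤ n → (∀ j ∈ C, w j < h) →
      (∀ j ∈ A \ C, w j ≤ h / 2) → 3 / 2 * h * n + h ≤ ∑ j ∈ A, w j → Cov w h (n + 1) A := by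
  induction n with
  | zero =>
    intro A C hw hCA hc hC hD hT
    exact Cov.one (by simpa using hT)
  | succ n ih =>
    intro A C hw hCA hc hC hD hT
    push_cast at hT
    have hsplit : ∑ j ∈ A \ C, w j + ∑ j ∈ C, w j = ∑ j ∈ A, w j := sum_sdiff hCA
    have hCsum := sum_le_card w h C (fun j hj => (hC j hj).le)
    have hcn : (C.card : ℝ) * h ≤ (n + 1) * h := by
      have : (C.card : ℝ) ≤ n + 1 := by exact_mod_cast hc
      exact mul_le_mul_of_nonneg_right this hh.le
    have hnh : 0 ≤ (n : ℝ) * h := by positivity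
    rcases C.eq_empty_or_nonempty with rfl | ⟨x, hx⟩
    · simp only [sdiff_empty, sum_empty] at *
      obtain ⟨B, hB, h1, h2⟩ := fill w h (h / 2) hh A hD (by nlinarith)
      refine Cov.step hw hB h1 (ih (A \ B) ∅ (fun j hj => hw j (sdiff_subset hj)) (by simp) (by simp)
        (by simp) ?_ ?_)
      · intro j hj
        exact hD j (by simp at hj; exact hj.1)
      · have := sum_sdiff (f := w) hB
        linarith
    · have hxh := hC x hx
      have hx0 := hw x (hCA hx)
      obtain ⟨B, hB, h1, h2⟩ := fill w (h - w x) (h / 2) (by linarith) (A \ C) hD (by nlinarith)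
      have hxB : x ∉ B := fun hb => (mem_sdiff.1 (hB hb)).2 hx
      have hsub : insert x B ⊆ A := insert_subset (hCA hx) (hB.trans sdiff_subset)
      refine Cov.step hw hsub ?_ (ih _ (C.erase x) (fun j hj => hw j (sdiff_subset hj)) ?_ ?_ ?_ ?_ ?_)
      · rw [sum_insert hxB]; linarith
      · intro j hj
        have hj' := mem_erase.1 hj
        simp only [mem_sdiff, mem_insert, not_or]
        exact ⟨hCA hj'.2, hj'.1, fun hb => (mem_sdiff.1 (hB hb)).2 hj'.2⟩
      · rw [card_erase_of_mem hx]; omega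
      · exact fun j hj => hC j (mem_of_mem_erase hj)
      · intro j hj
        simp only [mem_sdiff, mem_insert, not_or, mem_erase, not_and] at hj
        exact hD j (mem_sdiff.2 ⟨hj.1.1, hj.2 hj.1.2.1⟩)
      · have := sum_sdiff (f := w) hsub
        rw [sum_insert hxB] at this
        linarith

theorem L1 {ι : Type*} [DecidableEq ι] (w : ι → ℝ) (h : ℝ) (hh : 0 < h) (n : ℕ) :
    ∀ (A C : Finset ι), (∀ j ∈ A, 0 ≤ w j) → C ⊆ A → C.card + 2 ≤ 2 * n → 2 ≤ n →
      (∀ j ∈ C, w j < h) → (∀ j ∈ C, h / 2 ≤ w j) →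
      (∀ j ∈ A \ C, w j ≤ h / 2) → 2 * h * n ≤ ∑ j ∈ A, w j → Cov w h (n + 1) A := by
  induction n with
  | zero => intros; omega
  | succ n ih =>
    intro A C hw hCA hc hn hC hC2 hD hT
    push_cast at hT
    by_cases hcn : C.card ≤ n + 1
    · refine L2 w h hh (n + 1) A C hw hCA hcn hC hD ?_
      have : (1 : ℝ) ≤ n := by exact_mod_cast (by omega : 1 ≤ n)
      push_cast
      nlinarith
    · obtain ⟨P, hP, hPc⟩ := exists_subset_card_eq (s := C) (n := 2) (by omega)
      have hPA := hP.trans hCA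
      refine Cov.step hw hPA ?_ (ih (A \ P) (C \ P) (fun j hj => hw j (sdiff_subset hj)) ?_ ?_ ?_ ?_ ?_ ?_ ?_)
      · have := card_nsmul_le_sum P w (h / 2) (fun j hj => hC2 j (hP hj))
        rw [hPc] at this
        simp at this
        linarith
      · exact sdiff_subset_sdiff hCA (Subset.refl _)
      · rw [card_sdiff_of_subset hP]; omega
      · omega
      · exact fun j hj => hC j (sdiff_subset hj)
      · exact fun j hj => hC2 j (sdiff_subset hj)
      · intro j hj
        simp only [mem_sdiff, not_and, not_not] at hj
        exact hD j (mem_sdiff.2 ⟨hj.1.1, fun hjC => hj.1.2 (hj.2 hjC)⟩)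
      · have := sum_sdiff (f := w) hPA
        have h2 := sum_le_card w h P (fun j hj => (hC j (hP hj)).le)
        rw [hPc] at h2
        push_cast at h2
        linarith

/-- The price condition. -/
def Cond {ι : Type*} [DecidableEq ι] (w : ι → ℝ) (z : ℝ) (n : ℕ) (A : Finset ι) : Prop :=
  ∀ p : ι → ℝ, (∀ j ∈ A, 0 ≤ p j) → ∑ j ∈ A, p j ≤ n →
    ∃ S ⊆ A, ∑ j ∈ S, p j < 1 ∧ z ≤ ∑ j ∈ S, w j

/-- Half prices on a set of `2n` items. -/
theorem Cond.half {ι : Type*} [DecidableEq ι] {w : ι → ℝ} {z : ℝ} {n : ℕ} {A : Finset ι}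
    (hc : Cond w z n A) (hw : ∀ j ∈ A, 0 ≤ w j) (E : Finset ι) (hE : E ⊆ A) (hEc : E.card = 2 * n)
    (x : ℝ) (hx0 : 0 ≤ x) (hx : ∀ j ∈ E, w j ≤ x) : z ≤ x + ∑ j ∈ A \ E, w j := by
  obtain ⟨S, hS, h1, h2⟩ := hc (fun j => if j ∈ E then 1 / 2 else 0)
    (fun j _ => by split_ifs <;> norm_num) (by
      rw [sum_ite_mem, inter_eq_right.2 hE]
      simp [hEc]
      linarith)
  rw [sum_ite_mem] at h1
  simp only [sum_const, nsmul_eq_mul] at h1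
  have hcard : (S ∩ E).card ≤ 1 := by
    by_contra hcon
    have : (2 : ℝ) ≤ (S ∩ E).card := by exact_mod_cast (by omega : 2 ≤ (S ∩ E).card)
    linarith
  have h3 : ∑ j ∈ S ∩ E, w j ≤ x := by
    have := sum_le_card w x (S ∩ E) (fun j hj => hx j (mem_inter.1 hj).2)
    have h4 : ((S ∩ E).card : ℝ) ≤ 1 := by exact_mod_cast hcard
    nlinarith
  have h5 : ∑ j ∈ S \ E, w j ≤ ∑ j ∈ A \ E, w j :=
    sum_le_sum_of_subset_of_nonneg (sdiff_subset_sdiff hS (Subset.refl _))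
      (fun j hj _ => hw j (sdiff_subset hj))
  have h6 : ∑ j ∈ S ∩ E, w j + ∑ j ∈ S \ E, w j = ∑ j ∈ S, w j := sum_inter_add_sum_sdiff S E w
  linarith

theorem Cond.total {ι : Type*} [DecidableEq ι] {w : ι → ℝ} {z : ℝ} {n : ℕ} {A : Finset ι}
    (hz : 0 < z) (hc : Cond w z n A) (hw : ∀ j ∈ A, 0 ≤ w j) : z * n ≤ ∑ j ∈ A, w j := by
  obtain ⟨S0, hS0, -, h0⟩ := hc (fun _ => 0) (by simp) (by simp)
  have hT : 0 < ∑ j ∈ A, w j :=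
    lt_of_lt_of_le (by linarith) (sum_le_sum_of_subset_of_nonneg hS0 (fun j hj _ => hw j hj))
  set T := ∑ j ∈ A, w j with hTdef
  obtain ⟨S, hS, h1, h2⟩ := hc (fun j => (n / T) * w j)
    (fun j hj => mul_nonneg (by positivity) (hw j hj)) (by
      rw [← mul_sum, ← hTdef, div_mul_cancel₀ _ hT.ne'])
  rw [← mul_sum, div_mul_eq_mul_div, div_lt_one hT] at h1
  have : (n : ℝ) * z ≤ n * ∑ j ∈ S, w j := mul_le_mul_of_nonneg_left h2 (by positivity)
  linarith

theorem small_case {ι : Type*} [DecidableEq ι] (w : ι → ℝ) (h : ℝ) (hh : 0 < h) (n : ℕ) (hn : 1 ≤ n)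
    (A : Finset ι) (hw : ∀ j ∈ A, 0 ≤ w j) (hlt : ∀ j ∈ A, w j < h) (hc : Cond w (2 * h) n A) :
    Cov w h (n + 1) A := by
  have hT := hc.total (by linarith) hw
  have hn' : (1 : ℝ) ≤ n := by exact_mod_cast hn
  rcases Nat.lt_or_ge n 2 with hn2 | hn2
  · have : n = 1 := by omega
    subst this
    have hne : A.Nonempty := by
      rw [nonempty_iff_ne_empty]; rintro rfl; simp at hT; linarith
    obtain ⟨x, hx, hmax⟩ := exists_max_image A w hne
    obtain ⟨S, hS, h1, h2⟩ := hc (fun j => if j = x then 1 else 0)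
      (fun j _ => by split_ifs <;> norm_num) (by simp [hx])
    have hxS : x ∉ S := by
      intro hxS
      simp [hxS] at h1
    have h3 : ∑ j ∈ S, w j + w x ≤ ∑ j ∈ A, w j := by
      rw [add_comm, ← sum_insert hxS]
      exact sum_le_sum_of_subset_of_nonneg (insert_subset hx hS) (fun j hj _ => hw j hj)
    have hx0 := hw x hx
    obtain ⟨B, hB, h4, h5⟩ := fill w h (w x) hh A hmax (by linarith)
    refine Cov.step hw hB h4 (Cov.one ?_)
    have := sum_sdiff (f := w) hB
    linarith
  · set C := A.filter (fun j => h / 2 ≤ w j) with hCdef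
    have hCA : C ⊆ A := filter_subset _ _
    have hC2 : ∀ j ∈ C, h / 2 ≤ w j := fun j hj => (mem_filter.1 hj).2
    have hC : ∀ j ∈ C, w j < h := fun j hj => hlt j (hCA hj)
    have hD : ∀ j ∈ A \ C, w j ≤ h / 2 := by
      intro j hj
      simp only [hCdef, mem_sdiff, mem_filter, not_and, not_le] at hj
      exact (hj.2 hj.1).le
    rcases Nat.lt_or_ge C.card (2 * n) with hc1 | hc1
    · rcases Nat.lt_or_ge C.card (2 * n - 1) with hc2 | hc2
      · exact L1 w h hh n A C hw hCA (by omega) hn2 hC hC2 hD hT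
      · have hcard : C.card + 1 = 2 * n := by omega
        have hsplit : ∑ j ∈ A \ C, w j + ∑ j ∈ C, w j = ∑ j ∈ A, w j := sum_sdiff hCA
        have hCsum := sum_le_card w h C (fun j hj => (hC j hj).le)
        have hcard' : (C.card : ℝ) = 2 * n - 1 := by
          have : (C.card : ℝ) + 1 = 2 * n := by exact_mod_cast hcard
          linarith
        rw [hcard'] at hCsum
        have hDne : (A \ C).Nonempty := by
          rw [nonempty_iff_ne_empty]; intro he; rw [he, sum_empty] at hsplit; nlinarith
        have hCne : C.Nonempty := card_pos.1 (by omega)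
        obtain ⟨x, hx, hxmax⟩ := exists_max_image C w hCne
        obtain ⟨y, hy, hymax⟩ := exists_max_image (A \ C) w hDne
        have hyA := (mem_sdiff.1 hy).1
        have hyC := (mem_sdiff.1 hy).2
        have hsub : insert y C ⊆ A := insert_subset hyA hCA
        have key := hc.half hw (insert y C) hsub (by rw [card_insert_of_notMem hyC, hcard])
          (w x) (hw x (hCA hx)) (by
            intro j hj
            rcases mem_insert.1 hj with rfl | hj
            · exact (hD _ hy).trans (hC2 x hx)
            · exact hxmax j hj)
        have h7 := sum_sdiff (f := w) hsub
        rw [sum_insert hyC] at h7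
        have hxh := hC x hx
        have hy0 := hw y hyA
        obtain ⟨B, hB, h4, h5⟩ := fill w (h - w x) (w y) (by linarith) (A \ C) hymax (by linarith)
        have hxB : x ∉ B := fun hb => (mem_sdiff.1 (hB hb)).2 hx
        have hn3 : n + 1 = (n - 1) + 2 := by omega
        rw [hn3]
        refine pairs w h (n - 1) 2 A (C.erase x) hw ((erase_subset _ _).trans hCA) ?_
          (fun j hj => hC2 j (mem_of_mem_erase hj)) ?_
        · rw [card_erase_of_mem hx]; omega
        · have hs2 : insert x B ⊆ A \ C.erase x := by
            refine insert_subset ?_ ?_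
            · simp [hCA hx]
            · exact hB.trans (sdiff_subset_sdiff (Subset.refl _) (erase_subset _ _))
          refine Cov.step (fun j hj => hw j (sdiff_subset hj)) hs2 ?_ (Cov.one ?_)
          · rw [sum_insert hxB]; linarith
          · have h8 := sum_sdiff (f := w) hs2
            have h9 := sum_sdiff (f := w) ((erase_subset x C).trans hCA)
            have h10 := add_sum_erase C w hx
            rw [sum_insert hxB] at h8
            linarith
    · obtain ⟨E, hE, hEc⟩ := exists_subset_card_eq hc1
      have key := hc.half hw E (hE.trans hCA) hEc h hh.le (fun j hj => (hC j (hE hj)).le)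
      exact pairs w h n 1 A E hw (hE.trans hCA) hEc.ge (fun j hj => hC2 j (hE hj))
        (Cov.one (by linarith))

theorem cov_of_cond {ι : Type*} [DecidableEq ι] (w : ι → ℝ) (h : ℝ) (hh : 0 < h) (n : ℕ) :
    ∀ A : Finset ι, (∀ j ∈ A, 0 ≤ w j) → Cond w (2 * h) n A → Cov w h (n + 1) A := by
  induction n with
  | zero =>
    intro A hw hc
    obtain ⟨S, hS, -, h0⟩ := hc (fun _ => 0) (by simp) (by simp)
    have := sum_le_sum_of_subset_of_nonneg hS (fun j hj _ => hw j hj)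
    exact Cov.one (by linarith)
  | succ n ih =>
    intro A hw hc
    by_cases hl : ∃ x ∈ A, h ≤ w x
    · obtain ⟨x, hx, hxh⟩ := hl
      refine Cov.step hw (singleton_subset_iff.2 hx) (by simpa using hxh)
        (ih _ (fun j hj => hw j (sdiff_subset hj)) ?_)
      intro p hp hps
      have hp1 : ∀ S ⊆ A \ {x}, ∑ j ∈ S, (if j = x then 1 else p j) = ∑ j ∈ S, p j := by
        intro S hS
        refine sum_congr rfl (fun j hj => ?_)
        have := hS hj
        simp only [mem_sdiff, mem_singleton] at this
        simp [this.2]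
      obtain ⟨S, hS, h1, h2⟩ := hc (fun j => if j = x then 1 else p j) (by
          intro j hj
          by_cases hjx : j = x
          · simp [hjx]
          · simp only [hjx, if_false]
            exact hp j (by simp [hj, hjx])) (by
          rw [← sum_sdiff (singleton_subset_iff.2 hx), hp1 _ (Subset.refl _)]
          push_cast
          simp
          exact hps)
      have hxS : x ∉ S := by
        intro hxS
        have : (if x = x then (1 : ℝ) else p x) ≤ ∑ j ∈ S, (if j = x then 1 else p j) :=
          single_le_sum (f := fun j => if j = x then (1 : ℝ) else p j) (fun j hj => by
            by_cases hjx : j = x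
            · simp [hjx]
            · simp only [hjx, if_false]
              exact hp j (by simp [hS hj, hjx])) hxS
        simp only [if_true] at this
        linarith
      have hS' : S ⊆ A \ {x} := by
        intro j hj
        simp only [mem_sdiff, mem_singleton]
        exact ⟨hS hj, fun hjx => hxS (hjx ▸ hj)⟩
      refine ⟨S, hS', ?_, h2⟩
      rwa [hp1 S hS'] at h1
    · push Not at hl
      exact small_case w h hh (n + 1) (by omega) A hw hl hc

theorem exists_cheap {κ : Type*} [DecidableEq κ] (q : κ → ℝ) (l : ℕ) (hl : 0 < l) (m : ℕ) :
    ∀ s : Finset κ, s.card = l + m →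
      ∃ J ⊆ s, J.card = l ∧ (s.card : ℝ) * ∑ j ∈ J, q j ≤ l * ∑ j ∈ s, q j := by
  induction m with
  | zero =>
    intro s hs
    exact ⟨s, Subset.refl _, by omega, by rw [hs]; simp⟩
  | succ m ih =>
    intro s hs
    obtain ⟨x, hx, hmax⟩ := exists_max_image s q (card_pos.1 (by omega))
    have hce : (s.erase x).card = l + m := by rw [card_erase_of_mem hx]; omega
    obtain ⟨J, hJ, hJc, hJs⟩ := ih (s.erase x) hce
    refine ⟨J, hJ.trans (erase_subset _ _), hJc, ?_⟩
    have h1 := sum_le_card q (q x) (s.erase x) (fun j hj => hmax j (mem_of_mem_erase hj))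
    have h2 := add_sum_erase s q hx
    rw [hce] at h1 hJs
    rw [hs, ← h2]
    push_cast at *
    set a : ℝ := (l : ℝ) + m
    have hl' : (0 : ℝ) < l := by exact_mod_cast hl
    have ha : 0 < a := by positivity
    set Y := ∑ j ∈ s.erase x, q j
    set X := ∑ j ∈ J, q j
    have h3 : a * (((l : ℝ) + (m + 1)) * X) ≤ a * (l * (q x + Y)) := by
      have e : (l : ℝ) + (m + 1) = a + 1 := by simp only [a]; ring
      rw [e]
      have h4 : (a + 1) * (a * X) ≤ (a + 1) * (l * Y) :=
        mul_le_mul_of_nonneg_left hJs (by linarith)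
      have h5 : l * Y ≤ l * (a * q x) := mul_le_mul_of_nonneg_left h1 hl'.le
      nlinarith
    exact le_of_mul_le_mul_left h3 ha

theorem aff_finite {ι : Type*} (b : ℝ) (v : Finset ι → ℝ) (M : Finset ι) (p : ι → ℝ) :
    {u : ℝ | ∃ S, S ⊆ M ∧ (∑ j ∈ S, p j) ≤ b ∧ u = v S}.Finite := by
  refine (M.powerset.finite_toSet.image v).subset ?_
  rintro u ⟨S, hS, -, rfl⟩
  exact ⟨S, by simpa using hS, rfl⟩

theorem aff_nonempty {ι : Type*} (b : ℝ) (hb : 0 ≤ b) (v : Finset ι → ℝ) (M : Finset ι) (p : ι → ℝ) :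
    {u : ℝ | ∃ S, S ⊆ M ∧ (∑ j ∈ S, p j) ≤ b ∧ u = v S}.Nonempty :=
  ⟨v ∅, ∅, by simp, by simpa using hb, rfl⟩

/-- For additive valuations: proportional share ≥ AnyPrice share ≥ pessimistic share
≥ half the AnyPrice share. -/
theorem shares_comparison_chain {ι : Type*} [DecidableEq ι] (M : Finset ι)
    (w : ι → ℝ) (hw : ∀ j ∈ M, 0 ≤ w j)
    (b : ℝ) (hb0 : 0 < b) (hb1 : b ≤ 1) :
    APS b (fun S => ∑ j ∈ S, w j) M ≤ b * ∑ j ∈ M, w j ∧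
    Pessimistic b (fun S => ∑ j ∈ S, w j) M ≤ APS b (fun S => ∑ j ∈ S, w j) M ∧
    (1 / 2) * APS b (fun S => ∑ j ∈ S, w j) M
      ≤ Pessimistic b (fun S => ∑ j ∈ S, w j) M := by
  set v : Finset ι → ℝ := fun S => ∑ j ∈ S, w j with hv
  have hv0 : ∀ S ⊆ M, 0 ≤ v S := fun S hS => sum_nonneg (fun j hj => hw j (hS hj))
  have hvM : ∀ S ⊆ M, v S ≤ v M := fun S hS =>
    sum_le_sum_of_subset_of_nonneg hS (fun j hj _ => hw j hj)
  set X : Set ℝ := {t : ℝ | ∃ p : ι → ℝ, (∀ j ∈ M, 0 ≤ p j) ∧ (∑ j ∈ M, p j) = 1 ∧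
    t = sSup {u : ℝ | ∃ S, S ⊆ M ∧ (∑ j ∈ S, p j) ≤ b ∧ u = v S}} with hX
  set Y : Set ℝ := {t : ℝ | ∃ l d : ℕ, 0 < l ∧ 0 < d ∧ (l : ℝ) / d ≤ b ∧
    ∃ P : Fin d → Finset ι, IsPartition M P ∧
      ∀ J : Finset (Fin d), J.card = l → t ≤ v (J.biUnion P)} with hY
  change sInf X ≤ b * v M ∧ sSup Y ≤ sInf X ∧ (1 / 2) * sInf X ≤ sSup Y
  have hXbdd : BddBelow X := by
    refine ⟨0, ?_⟩
    rintro t ⟨p, -, -, rfl⟩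
    exact le_csSup_of_le (aff_finite b v M p).bddAbove ⟨∅, by simp, by simpa using hb0.le, rfl⟩
      (hv0 ∅ (by simp))
  have hXe : M = ∅ → X = ∅ := by
    rintro rfl
    rw [Set.eq_empty_iff_forall_notMem]
    rintro t ⟨p, -, h, -⟩
    simp at h
  have hXne : M.Nonempty → X.Nonempty := by
    rintro ⟨x, hx⟩
    exact ⟨_, fun j => if j = x then 1 else 0, fun j _ => by dsimp only; split_ifs <;> norm_num,
      by simp [hx], rfl⟩
  have hYM : ∀ t ∈ Y, t ≤ v M := by
    rintro t ⟨l, d, hl, hd, hld, P, hP, hJ⟩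
    have hld' : l ≤ d := by
      have h1 : (l : ℝ) / d ≤ 1 := hld.trans hb1
      rw [div_le_one (by exact_mod_cast hd)] at h1
      exact_mod_cast h1
    obtain ⟨J, -, hJc⟩ := exists_subset_card_eq (s := (univ : Finset (Fin d))) (n := l) (by simpa)
    exact (hJ J hJc).trans (hvM _ (biUnion_subset.2 (fun i _ => hP.1 i)))
  have hYbdd : BddAbove Y := ⟨v M, hYM⟩
  set d := ⌈1 / b⌉₊ with hd
  have hd0 : 0 < d := Nat.ceil_pos.2 (by positivity)
  have hdb : ((1 : ℕ) : ℝ) / d ≤ b := by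
    have h1 : 1 / b ≤ d := Nat.le_ceil _
    rw [div_le_iff₀ hb0] at h1
    rw [div_le_iff₀ (by exact_mod_cast hd0)]
    push_cast; linarith
  have hYcov : ∀ h : ℝ, Cov w h d M → h ≤ sSup Y := by
    rintro h ⟨f, hf⟩
    refine le_csSup hYbdd ⟨1, d, one_pos, hd0, hdb,
      fun i => M.filter (fun j => (if f j < d then f j else 0) = i), ⟨?_, ?_, ?_⟩, ?_⟩
    · exact fun i => filter_subset _ _
    · intro i j hij
      rw [disjoint_left]
      intro x hx hx'
      exact hij (Fin.ext ((mem_filter.1 hx).2.symm.trans (mem_filter.1 hx').2))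
    · intro x hx
      refine ⟨⟨if f x < d then f x else 0, by split_ifs <;> assumption⟩, ?_⟩
      simp [hx]
    · intro J hJ
      obtain ⟨i, rfl⟩ := card_eq_one.1 hJ
      rw [singleton_biUnion]
      refine (hf i i.2).trans (sum_le_sum_of_subset_of_nonneg ?_ ?_)
      · intro j hj
        simp only [mem_filter] at hj ⊢
        refine ⟨hj.1, ?_⟩
        rw [if_pos (by rw [hj.2]; exact i.2)]
        exact hj.2
      · intro j hj _
        exact hw j (mem_filter.1 hj).1
  have hY0 : 0 ≤ sSup Y := by
    refine hYcov 0 ⟨fun _ => 0, fun i _ => sum_nonneg (fun j hj => hw j (mem_filter.1 hj).1)⟩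
  have hYne : Y.Nonempty := by
    refine ⟨0, 1, d, one_pos, hd0, hdb,
      fun i => if i = ⟨0, hd0⟩ then M else ∅, ⟨?_, ?_, ?_⟩, ?_⟩
    · intro i; dsimp only; split_ifs <;> simp
    · intro i j hij
      dsimp only
      split_ifs with h1 h2
      · exact absurd (h1.trans h2.symm) hij
      all_goals simp
    · intro x hx
      exact ⟨⟨0, hd0⟩, by simpa using hx⟩
    · intro J _
      refine hv0 _ (biUnion_subset.2 (fun i _ => ?_))
      split_ifs <;> simp
  refine ⟨?_, ?_, ?_⟩
  · rcases M.eq_empty_or_nonempty with hM | hM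
    · rw [hXe hM, Real.sInf_empty]
      exact mul_nonneg hb0.le (hv0 M (Subset.refl _))
    · rcases (hv0 M (Subset.refl _)).eq_or_lt with h0 | h0
      · obtain ⟨t, p, hp, hp1, rfl⟩ := hXne hM
        refine (csInf_le hXbdd ⟨p, hp, hp1, rfl⟩).trans
          (csSup_le (aff_nonempty b hb0.le v M p) ?_)
        rintro u ⟨S, hS, -, rfl⟩
        rw [← h0, mul_zero, h0]
        exact hvM S hS
      · have e : ∀ S : Finset ι, ∑ j ∈ S, w j / v M = v S / v M := fun S => by
          rw [← sum_div]
        refine (csInf_le hXbdd ⟨fun j => w j / v M, fun j hj => div_nonneg (hw j hj) h0.le,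
          by rw [e, div_self h0.ne'], rfl⟩).trans
          (csSup_le (aff_nonempty b hb0.le v M _) ?_)
        rintro u ⟨S, hS, hSb, rfl⟩
        rw [e, div_le_iff₀ h0] at hSb
        exact hSb
  · refine csSup_le hYne (fun t ht => ?_)
    rcases M.eq_empty_or_nonempty with hM | hM
    · rw [hXe hM, Real.sInf_empty]
      refine (hYM t ht).trans ?_
      rw [hM]; simp [hv]
    · refine le_csInf (hXne hM) ?_
      rintro _ ⟨p, hp, hp1, rfl⟩
      obtain ⟨l, e, hl, he, hle, P, hP, hJ⟩ := ht
      have he' : (0 : ℝ) < e := by exact_mod_cast he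
      have hle' : l ≤ e := by
        have h1 : (l : ℝ) / e ≤ 1 := hle.trans hb1
        rw [div_le_one he'] at h1
        exact_mod_cast h1
      obtain ⟨J, -, hJc, hJp⟩ := exists_cheap (fun i => ∑ j ∈ P i, p j) l hl (e - l)
        (univ : Finset (Fin e)) (by simp; omega)
      have hdis : ∀ J : Finset (Fin e), ∑ j ∈ J.biUnion P, p j = ∑ i ∈ J, ∑ j ∈ P i, p j :=
        fun J => sum_biUnion (fun i _ j _ hij => hP.2.1 i j hij)
      have hall : univ.biUnion P = M := by
        ext x
        simp only [mem_biUnion, mem_univ, true_and]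
        exact ⟨fun ⟨i, hi⟩ => hP.1 i hi, fun hx => hP.2.2 x hx⟩
      rw [← hdis, ← hdis, hall, hp1, mul_one, card_univ, Fintype.card_fin] at hJp
      refine (hJ J hJc).trans (le_csSup (aff_finite b v M p).bddAbove
        ⟨J.biUnion P, biUnion_subset.2 (fun i _ => hP.1 i), ?_, rfl⟩)
      refine le_trans ?_ hle
      rw [le_div_iff₀ he']
      linarith
  · rcases le_or_gt (sInf X) 0 with hz | hz
    · linarith
    · set z := sInf X with hzdef
      have hMv : ∀ p : ι → ℝ, (∀ j ∈ M, 0 ≤ p j) → ∑ j ∈ M, p j = 1 →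
          ∃ S ⊆ M, ∑ j ∈ S, p j ≤ b ∧ z ≤ v S := by
        intro p hp hp1
        obtain ⟨S, hS, hSb, hSv⟩ := (aff_nonempty b hb0.le v M p).csSup_mem (aff_finite b v M p)
        refine ⟨S, hS, hSb, ?_⟩
        rw [← hSv]
        exact csInf_le hXbdd ⟨p, hp, hp1, rfl⟩
      have hM : M.Nonempty := by
        rw [nonempty_iff_ne_empty]
        intro hM
        rw [hzdef, hXe hM, Real.sInf_empty] at hz
        exact lt_irrefl _ hz
      have hzM : z ≤ v M := by
        obtain ⟨t, p, hp, hp1, -⟩ := hXne hM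
        obtain ⟨S, hS, -, h⟩ := hMv p hp hp1
        exact h.trans (hvM S hS)
      have hcond : Cond w (2 * (1 / 2 * z)) (d - 1) M := by
        have hzz : 2 * (1 / 2 * z) = z := by ring
        rw [hzz]
        intro p hp hps
        rcases (sum_nonneg hp).eq_or_lt with h0 | h0
        · exact ⟨M, Subset.refl _, by rw [← h0]; norm_num, hzM⟩
        · set s := ∑ j ∈ M, p j with hs
          obtain ⟨S, hS, hSb, hSz⟩ := hMv (fun j => p j / s) (fun j hj => div_nonneg (hp j hj) h0.le)
            (by rw [← sum_div, ← hs, div_self h0.ne'])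
          refine ⟨S, hS, ?_, hSz⟩
          rw [← sum_div, div_le_iff₀ h0] at hSb
          have h1 : ((d - 1 : ℕ) : ℝ) < 1 / b := Nat.lt_ceil.1 (by omega)
          rw [lt_div_iff₀ hb0] at h1
          nlinarith
      have := cov_of_cond w (1 / 2 * z) (by linarith) (d - 1) M hw hcond
      rw [Nat.sub_add_cancel hd0] at this
      exact hYcov _ this
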